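/- Let F_n be the free group of rank n with basis x_1,…,x_n. If y_1,…,y_m ∈ F_n generate F_n, then m ≥ n and the m-tuple (y_1,…,y_m) is Nielsen equivalent in F_n to (x_1,…,x_n,1,…,1) with m − n trailing trivial entries. -/

import Mathlib

/-!
The proof is Nielsen's reduction method. Among all tuples Nielsen equivalent to `y`, choose `g`
minimizing the total weight, where the weight of a word is its length followed by a tie-breaker that
depends on its initial half and on the initial half of its inverse (`exists_isWtMinimal`). Write `v`
for any entry of `g` or its inverse, and `(u|v) = lcp u v` for the length of the common prefix of
the reduced words of `u` and `v`, so that `|u⁻¹ v| = |u| + |v| - 2 (u|v)` (`norm_inv_mul_add`); thus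
`(u⁻¹|v)` counts the letters of `u` cancelled in `u v`. The nontrivial entries of `g` form a
Nielsen reduced system (`IsWtMinimal.nielsenReduced`):

* `2 (u⁻¹|v) ≤ |u|, |v|`, because otherwise replacing an entry by `u v` shortens the
  tuple; for `u = v` it holds in any free group (`two_lcp_inv_self_lt`);
* `(u⁻¹|v) + (v⁻¹|w) < |v|`. If this failed, `v` would be `p q⁻¹` with `|p| = |q|`, where `p` is
  cancelled in `u v` and `q⁻¹` in `v w`. Then `v w` and `u v` are as long as `w` and `u`, and they
  arise by exchanging the prefix `q` of `w` for `p` and the prefix `p` of `u⁻¹` for `q`. Minimality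
  of the tie-breaker allows neither to decrease, so `p = q` and `v = 1`.

In a product of a Nielsen reduced system along a reduced sequence, cancellation is therefore local:
since the common prefix length satisfies the ultrametric inequality `min_lcp_le`, each factor
cancels against the remaining product exactly as it does against the next factor
(`NielsenReduced.word`). A product of at least two factors has length at least two, so, when the
entries generate the free group, every basis element occurs among them up to inversion
(`NielsenReduced.exists_eq_of`). Any further nontrivial entry could be shortened by multiplying with
a basis element (`IsWtMinimal.eq_one`). Hence `g` is, up to signs and order, the tuple
`(x₁, …, xₙ, 1, …, 1)`, and signs and order are adjusted by elementary transformations.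
-/

/-- An elementary Nielsen transformation on an `n`-tuple of elements of `G`:
inverting an entry, swapping two entries, or multiplying an entry on the right
by another entry or its inverse. -/
def ElemNielsen {G : Type*} [Group G] {n : ℕ} (g g' : Fin n → G) : Prop :=
  (∃ i, g' = Function.update g i (g i)⁻¹) ∨
  (∃ i j, i ≠ j ∧ g' = g ∘ (Equiv.swap i j)) ∨
  (∃ i j, i ≠ j ∧ (g' = Function.update g i (g i * g j) ∨
                   g' = Function.update g i (g i * (g j)⁻¹)))

/-- Nielsen equivalence: a finite chain of elementary Nielsen transformations. -/
def NielsenEq {G : Type*} [Group G] {n : ℕ} (g g' : Fin n → G) : Prop :=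
  Relation.ReflTransGen ElemNielsen g g'

section
open FreeGroup

/-! ### Common prefixes of lists -/

/-- The length of the longest common prefix of two lists. -/
def lcp {A : Type*} [DecidableEq A] : List A → List A → ℕ
  | a :: s, b :: t => if a = b then lcp s t + 1 else 0
  | _, _ => 0

section
variable {A : Type*} [DecidableEq A]

theorem lcp_comm : ∀ l₁ l₂ : List A, lcp l₁ l₂ = lcp l₂ l₁
  | [], [] => rfl
  | [], _ :: _ => by simp [lcp]
  | _ :: _, [] => by simp [lcp]
  | a :: s, b :: t => by
    by_cases h : a = b
    · simp [lcp, h, lcp_comm s t]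
    · simp [lcp, h, Ne.symm h]

theorem lcp_self (l : List A) : lcp l l = l.length := by
  induction l with
  | nil => simp [lcp]
  | cons a s ih => simp [lcp, ih]

theorem lcp_le_left : ∀ l₁ l₂ : List A, lcp l₁ l₂ ≤ l₁.length
  | [], _ => by simp [lcp]
  | _ :: _, [] => by simp [lcp]
  | a :: s, b :: t => by
    have := lcp_le_left s t
    by_cases h : a = b <;> simp [lcp, h, this]

/-- The ultrametric inequality for common prefixes; it encodes that the Cayley graph of a free group
is a tree. -/
theorem min_lcp_le : ∀ l₁ l₂ l₃ : List A, min (lcp l₁ l₂) (lcp l₂ l₃) ≤ lcp l₁ l₃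
  | [], _, _ => by simp [lcp]
  | _ :: _, [], _ => by simp [lcp]
  | _ :: _, _ :: _, [] => by simp [lcp]
  | a :: s, b :: t, c :: u => by
    have := min_lcp_le s t u
    by_cases h : a = b
    · by_cases h' : b = c
      · subst h h'
        simp only [lcp, if_true]
        omega
      · simp [lcp, h']
    · simp [lcp, h]

theorem take_eq_of_le_lcp : ∀ (k : ℕ) (l₁ l₂ : List A), k ≤ lcp l₁ l₂ → l₁.take k = l₂.take k
  | 0, _, _, _ => by simp
  | _ + 1, [], _, h => by simp [lcp] at h
  | _ + 1, _ :: _, [], h => by simp [lcp] at h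
  | k + 1, a :: s, b :: t, h => by
    by_cases hab : a = b
    · simp only [lcp, hab, if_true, Nat.add_le_add_iff_right] at h
      simp [hab, take_eq_of_le_lcp k s t h]
    · simp [lcp, hab] at h

theorem le_lcp_of_take_eq : ∀ (k : ℕ) (l₁ l₂ : List A), k ≤ l₁.length → k ≤ l₂.length →
    l₁.take k = l₂.take k → k ≤ lcp l₁ l₂
  | 0, _, _, _, _, _ => Nat.zero_le _
  | _ + 1, [], _, h, _, _ => by simp at h
  | _ + 1, _ :: _, [], _, h, _ => by simp at h
  | k + 1, a :: s, b :: t, h₁, h₂, h => by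
    simp only [List.take_succ_cons, List.cons.injEq] at h
    simpa [lcp, h.1] using le_lcp_of_take_eq k s t (by simpa using h₁) (by simpa using h₂) h.2

theorem drop_lcp_head : ∀ (l₁ l₂ : List A),
    ∀ a ∈ (l₁.drop (lcp l₁ l₂)).head?, ∀ b ∈ (l₂.drop (lcp l₁ l₂)).head?, a ≠ b
  | [], _ => by simp
  | _ :: _, [] => by simp
  | a :: s, b :: t => by
    by_cases hab : a = b
    · simpa [lcp, hab] using drop_lcp_head s t
    · simp [lcp, hab]
end

/-! ### Cancellation in the free group -/

section
variable {α : Type*} [DecidableEq α]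

/-- A word for `g` of minimal length is the reduced word of `g`. -/
theorem toWord_mk_of_norm {g : FreeGroup α} {l : List (α × Bool)} (h : mk l = g)
    (hl : l.length = g.norm) : g.toWord = l := by
  subst h
  rw [FreeGroup.norm, toWord_mk] at hl
  rw [toWord_mk]
  exact (reduce.red (L := l)).sublist.eq_of_length hl.symm

/-- Exactly the common prefix of `x` and `y` is cancelled in `x⁻¹ * y`. -/
theorem norm_inv_mul_add (x y : FreeGroup α) :
    (x⁻¹ * y).norm + 2 * lcp x.toWord y.toWord = x.norm + y.norm := by
  set k := lcp x.toWord y.toWord with hk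
  have hp := take_eq_of_le_lcp k x.toWord y.toWord le_rfl
  have hh := drop_lcp_head x.toWord y.toWord
  rw [← hk] at hh
  have hx := List.take_append_drop k x.toWord
  have hy := List.take_append_drop k y.toWord
  rw [hp] at hx
  have hkx : k ≤ x.norm := lcp_le_left _ _
  have hky : k ≤ y.norm := by rw [hk, lcp_comm]; exact lcp_le_left _ _
  have e : x⁻¹ * y = mk (invRev (x.toWord.drop k) ++ y.toWord.drop k) := by
    have ex : x = mk (y.toWord.take k) * mk (x.toWord.drop k) := by rw [mul_mk, hx, mk_toWord]
    have ey : y = mk (y.toWord.take k) * mk (y.toWord.drop k) := by rw [mul_mk, hy, mk_toWord]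
    rw [← mul_mk, ← inv_mk]
    nth_rewrite 1 [ex]
    nth_rewrite 2 [ey]
    group
  have red : IsReduced (invRev (x.toWord.drop k) ++ y.toWord.drop k) := by
    have h1 : IsReduced (x.toWord.drop k) := (isReduced_toWord (x := x)).drop k
    have h2 : IsReduced (y.toWord.drop k) := (isReduced_toWord (x := y)).drop k
    have h1' : IsReduced (invRev (x.toWord.drop k)) := by
      rw [isReduced_iff_reduce_eq, reduce_invRev, h1.reduce_eq]
    refine List.isChain_append.2 ⟨h1', h2, ?_⟩
    intro a ha b hb
    cases hd : x.toWord.drop k with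
    | nil => simp [hd] at ha
    | cons c s =>
      have hcb := hh c (by simp [hd]) b hb
      simp only [hd, invRev, List.map_cons, List.reverse_cons, List.getLast?_append,
        List.getLast?_singleton, Option.some_or, Option.mem_def, Option.some.injEq] at ha
      subst ha
      intro h
      by_contra h'
      apply hcb
      ext
      · exact h
      · simpa using h'
  have : (x⁻¹ * y).norm = (x.norm - k) + (y.norm - k) := by
    rw [e, FreeGroup.norm, toWord_mk, red.reduce_eq]
    simp [FreeGroup.norm]
  omega

/-- Fewer than half of the letters of `x` are cancelled in `x * x`; that is, `x ^ 2` is longer than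
`x`. -/
theorem two_lcp_inv_self_lt {x : FreeGroup α} (hx : x ≠ 1) :
    2 * lcp x⁻¹.toWord x.toWord < x.norm := by
  by_contra! h
  set w := x.toWord with hw
  have hlen : w.length = x.norm := rfl
  obtain ⟨r, hr⟩ : ∃ r, x.norm = 2 * r ∨ x.norm = 2 * r + 1 := ⟨x.norm / 2, by omega⟩
  rcases hr with hr | hr
    -- In even length, `x = p * s` with `s⁻¹ = p`, so `x = 1`.
  · have ht := take_eq_of_le_lcp r _ _ (show r ≤ lcp x⁻¹.toWord w by omega)
    rw [toWord_inv, ← hw] at ht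
    have h2 := List.take_append_drop r w
    have hi : (invRev w).take r = invRev (w.drop r) := by
      conv_lhs => rw [← h2]
      rw [invRev_append, List.take_left' (by simp; omega)]
    apply hx
    rw [← mk_toWord (x := x), ← hw, ← h2, ← ht, hi, ← mul_mk, ← inv_mk, inv_mul_cancel]
    -- In odd length, the middle letter would be its own inverse.
  · have ht := take_eq_of_le_lcp (r + 1) _ _ (show r + 1 ≤ lcp x⁻¹.toWord w by omega)
    have ht' := congrArg (fun l => l[r]?) ht
    have hl : r < w.length := by omega
    simp only [toWord_inv, ← hw, invRev, List.getElem?_take] at ht'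
    rw [List.getElem?_reverse (by simp; omega)] at ht'
    have : w.length - 1 - r = r := by omega
    simp [this, hl] at ht'
    have := congrArg Prod.snd ht'
    simp at this
end

/-! ### Weights of words -/

section
variable {n : ℕ}

/-- A numbering of the letters `xᵢ⁻¹, xᵢ` by `2 * i, 2 * i + 1`. -/
def digit (x : Fin n × Bool) : ℕ := 2 * x.1 + x.2.toNat

theorem digit_injective : Function.Injective (digit (n := n)) := by
  rintro ⟨a, b⟩ ⟨c, d⟩ h
  ext1
  · cases b <;> cases d <;> simp [digit] at h <;> ext <;> omega
  · cases b <;> cases d <;> simp [digit] at h ⊢ <;> omega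

theorem digit_lt (x : Fin n × Bool) : digit x < 2 * n + 2 := by
  have := x.1.2
  have := x.2.toNat_le
  unfold digit
  omega

/-- The number whose base `2 * n + 2` digits, least significant first, are the letters of `l`. On
words of a fixed length it is injective, and exchanging a prefix for another one of the same length
changes it in the same direction as the code of the prefix. -/
def code (l : List (Fin n × Bool)) : ℕ := Nat.ofDigits (2 * n + 2) (l.map digit)

theorem code_append_le_iff {p q s : List (Fin n × Bool)} (h : p.length = q.length) :
    code (p ++ s) ≤ code (q ++ s) ↔ code p ≤ code q := by
  simp [code, Nat.ofDigits_append, h]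

theorem eq_of_code_eq {p q : List (Fin n × Bool)} (h : p.length = q.length)
    (hc : code p = code q) : p = q := by
  apply List.map_injective_iff.2 digit_injective
  refine Nat.ofDigits_inj_of_len_eq (b := 2 * n + 2) (by omega) (by simpa using h) ?_ ?_ hc <;>
  · intro l hl
    obtain ⟨x, -, rfl⟩ := List.mem_map.1 hl
    exact digit_lt x

/-- The initial half of the reduced word of `v`, including the middle letter in odd length. -/
def half (v : FreeGroup (Fin n)) : List (Fin n × Bool) := v.toWord.take ((v.norm + 1) / 2)

/-- The tie-breaker between words of the same length. It is invariant under inversion. -/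
def tie (v : FreeGroup (Fin n)) : ℕ := code (half v) + code (half v⁻¹)

/-- The weight of a word: its length, then its tie-breaker, ordered lexicographically. -/
def wt (v : FreeGroup (Fin n)) : ℕ ×ₗ ℕ := toLex (v.norm, tie v)

theorem tie_inv (v : FreeGroup (Fin n)) : tie v⁻¹ = tie v := by
  simp [tie, add_comm]

theorem wt_inv (v : FreeGroup (Fin n)) : wt v⁻¹ = wt v := by
  simp [wt, tie_inv]

/-- Let `v = p * q⁻¹` with `|p| = |q| = k`, and suppose that exactly `q⁻¹` is cancelled in `v * u`
and that this is at most half of `u`. Then `v * u` arises from `u` by exchanging its prefix `q` for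
`p`, which affects the tie-breaker only through the initial half of `u`. -/
theorem code_take_le {v u : FreeGroup (Fin n)} {k : ℕ} (hv : v.norm = 2 * k)
    (hu : 2 * k ≤ u.norm) (hk : lcp v⁻¹.toWord u.toWord = k) (ht : tie u ≤ tie (v * u)) :
    code (v⁻¹.toWord.take k) ≤ code (v.toWord.take k) := by
  set p := v.toWord.take k with hp
  set q := v⁻¹.toWord.take k with hq
  have hvl : v.toWord.length = 2 * k := hv
  have hul : u.toWord.length = u.norm := rfl
  have hpl : p.length = k := by simp [hp]; omega
  have hql : q.length = k := by simp [hq, toWord_inv]; omega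
  obtain ⟨b, hb⟩ : ∃ b, u.toWord = q ++ b := by
    refine ⟨u.toWord.drop k, ?_⟩
    rw [hq, take_eq_of_le_lcp k _ _ hk.ge, List.take_append_drop]
  have hbl : b.length + k = u.norm := by
    rw [← hul, hb, List.length_append, hql]; omega
  have hvq : v.toWord = p ++ invRev q := by
    have h1 : q = invRev (v.toWord.drop k) := by
      rw [hq, toWord_inv]
      conv_lhs => rw [← List.take_append_drop k v.toWord]
      rw [invRev_append, List.take_left' (by simp; omega)]
    rw [h1, invRev_invRev, hp, List.take_append_drop]
  have hn : (v * u).norm = u.norm := by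
    have := norm_inv_mul_add v⁻¹ u
    rw [inv_inv, norm_inv_eq, hk] at this
    omega
  have hvu : (v * u).toWord = p ++ b := by
    apply toWord_mk_of_norm
    · have ev : v = mk p * (mk q)⁻¹ := by rw [inv_mk, mul_mk, ← hvq, mk_toWord]
      have eu : u = mk q * mk b := by rw [mul_mk, ← hb, mk_toWord]
      rw [ev, eu, ← mul_mk]
      group
    · rw [List.length_append, hn]; omega
  obtain ⟨d, hd⟩ : ∃ d, (u.norm + 1) / 2 = k + d := ⟨(u.norm + 1) / 2 - k, by omega⟩
  have e1 : half u = q ++ b.take d := by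
    rw [half, hd, hb, ← hql, List.take_length_add_append]
  have e2 : half (v * u) = p ++ b.take d := by
    rw [half, hn, hd, hvu, ← hpl, List.take_length_add_append]
  have e3 : half (v * u)⁻¹ = half u⁻¹ := by
    rw [half, half, norm_inv_eq, norm_inv_eq, hn, toWord_inv, toWord_inv, hvu, hb, invRev_append,
      invRev_append, List.take_append_of_le_length (by simp; omega),
      List.take_append_of_le_length (by simp; omega)]
  rw [tie, tie, e1, e2, e3, Nat.add_le_add_iff_right, code_append_le_iff (by omega)] at ht
  exact ht
end

/-! ### Nielsen reduced systems -/

section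
variable {α I : Type*} [DecidableEq α]

/-- The entry `g x.1` if the sign `x.2` is `true`, and its inverse otherwise. -/
def signed (g : I → FreeGroup α) (x : I × Bool) : FreeGroup α := cond x.2 (g x.1) (g x.1)⁻¹

/-- A Nielsen reduced system. The usual conditions on the lengths of products are expressed through
the number `lcp u⁻¹ v` of letters of `u` cancelled in `u * v`. The condition
`x.1 = y.1 → x.2 = y.2` says that the signed indices `x, y` are not inverse to each other, in the
form used by `FreeGroup.IsReduced`. -/
structure NielsenReduced (g : I → FreeGroup α) : Prop where
  ne_one : ∀ i, g i ≠ 1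
  two_lcp_le_left : ∀ x y : I × Bool, (x.1 = y.1 → x.2 = y.2) →
    2 * lcp (signed g x)⁻¹.toWord (signed g y).toWord ≤ (signed g x).norm
  two_lcp_le_right : ∀ x y : I × Bool, (x.1 = y.1 → x.2 = y.2) →
    2 * lcp (signed g x)⁻¹.toWord (signed g y).toWord ≤ (signed g y).norm
  lcp_add_lcp_lt : ∀ x y z : I × Bool, (x.1 = y.1 → x.2 = y.2) → (y.1 = z.1 → y.2 = z.2) →
    lcp (signed g x)⁻¹.toWord (signed g y).toWord +
      lcp (signed g y)⁻¹.toWord (signed g z).toWord < (signed g y).norm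

variable {g : I → FreeGroup α}

theorem NielsenReduced.norm_pos (hg : NielsenReduced g) (x : I × Bool) :
    0 < (signed g x).norm := by
  have := hg.ne_one x.1
  rw [Nat.pos_iff_ne_zero, Ne, FreeGroup.norm_eq_zero]
  unfold signed
  cases x.2 <;> simpa

/-- Cancellation is local in a product along a reduced word `y :: L`: the prefix of the first factor
that survives in the product is longer than what any admissible factor on its left cancels from
`y`. Consequently the product is at least as long as its first factor, and it has length one only
if there is just one factor. -/
theorem NielsenReduced.word (hg : NielsenReduced g) : ∀ (y : I × Bool) (L : List (I × Bool)),
    IsReduced (y :: L) →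
    (∀ x : I × Bool, (x.1 = y.1 → x.2 = y.2) →
      lcp (signed g x)⁻¹.toWord (signed g y).toWord <
        lcp (signed g y).toWord ((y :: L).map (signed g)).prod.toWord) ∧
    (signed g y).norm ≤ ((y :: L).map (signed g)).prod.norm ∧
    (((y :: L).map (signed g)).prod.norm = 1 → L = [])
  | y, [], _ => by
    refine ⟨fun x hx => ?_, by simp, by simp⟩
    have h1 := hg.two_lcp_le_right x y hx
    have h2 := hg.norm_pos y
    have h3 : (signed g y).toWord.length = (signed g y).norm := rfl
    simp only [List.map_cons, List.map_nil, List.prod_cons, List.prod_nil, mul_one, lcp_self]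
    omega
  | y, z :: L, hr => by
    obtain ⟨hyz, hr'⟩ := isReduced_cons_cons.1 hr
    obtain ⟨ih1, ih2, -⟩ := hg.word z L hr'
    have ih1 := ih1 y hyz
    rw [List.map_cons, List.prod_cons]
    set w := ((z :: L).map (signed g)).prod with hw
    -- In a tree, `(a|b) < (b|c)` forces `(a|c) = (a|b)`.
    have hc : lcp (signed g y)⁻¹.toWord w.toWord =
        lcp (signed g y)⁻¹.toWord (signed g z).toWord := by
      have h1 := min_lcp_le (signed g y)⁻¹.toWord (signed g z).toWord w.toWord
      have h2 := min_lcp_le (signed g y)⁻¹.toWord w.toWord (signed g z).toWord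
      rw [lcp_comm w.toWord] at h2
      omega
    have hn := norm_inv_mul_add (signed g y)⁻¹ w
    rw [inv_inv, norm_inv_eq, hc] at hn
    have hn' := norm_inv_mul_add (signed g y) (signed g y * w)
    rw [inv_mul_cancel_left] at hn'
    have hl := hg.two_lcp_le_left y z hyz
    have hr := hg.two_lcp_le_right y z hyz
    have hy := hg.norm_pos y
    have hz := hg.norm_pos z
    refine ⟨fun x hx => ?_, by omega, by omega⟩
    have := hg.lcp_add_lcp_lt x y z hx hyz
    omega

/-- A basis element has length one, so it can only be a product of a single factor. -/
theorem NielsenReduced.exists_eq_of (hg : NielsenReduced g)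
    (hgen : Subgroup.closure (Set.range g) = ⊤) (a : α) :
    ∃ i, g i = of a ∨ g i = (of a)⁻¹ := by
  classical
  have : of a ∈ (lift g).range := by rw [range_lift_eq_closure, hgen]; trivial
  obtain ⟨u, hu⟩ := this
  have hu' : (u.toWord.map (signed g)).prod = of a := by
    conv_rhs => rw [← hu, ← mk_toWord (x := u), lift_mk]
    rfl
  cases hL : u.toWord with
  | nil => simp [hL, one_ne_of] at hu'
  | cons y L =>
    rw [hL] at hu'
    have := (hg.word y L (hL ▸ isReduced_toWord)).2.2 (by rw [hu', norm_of])
    subst this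
    refine ⟨y.1, ?_⟩
    simp only [signed, List.map_cons, List.map_nil, List.prod_cons, List.prod_nil, mul_one] at hu'
    cases h : y.2
    · right
      rw [h] at hu'
      rw [← hu', cond_false, inv_inv]
    · left
      rw [h] at hu'
      exact hu'
end

/-! ### Nielsen equivalence -/

section
variable {G : Type*} [Group G] {m : ℕ}

theorem ElemNielsen.closure_le {g g' : Fin m → G} (h : ElemNielsen g g') :
    Subgroup.closure (Set.range g) ≤ Subgroup.closure (Set.range g') := by
  have key : ∀ i, g' i ∈ Subgroup.closure (Set.range g') := fun i =>
    Subgroup.subset_closure ⟨i, rfl⟩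
  rw [Subgroup.closure_le]
  rintro _ ⟨k, rfl⟩
  rcases h with ⟨i, rfl⟩ | ⟨i, j, -, rfl⟩ | ⟨i, j, hij, rfl | rfl⟩
  · by_cases hk : k = i
    · subst hk
      simpa using key k
    · simpa [hk] using key k
  · simpa using key (Equiv.swap i j k)
  · by_cases hk : k = i
    · subst hk
      have h1 := key k
      have h2 := key j
      rw [Function.update_of_ne hij.symm] at h2
      rw [Function.update_self] at h1
      exact (Subgroup.mul_mem_cancel_right _ h2).1 h1
    · simpa [hk] using key k
  · by_cases hk : k = i
    · subst hk
      have h1 := key k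
      have h2 := key j
      rw [Function.update_of_ne hij.symm] at h2
      rw [Function.update_self] at h1
      exact (Subgroup.mul_mem_cancel_right _ (Subgroup.inv_mem _ h2)).1 h1
    · simpa [hk] using key k

theorem NielsenEq.closure_le {g g' : Fin m → G} (h : NielsenEq g g') :
    Subgroup.closure (Set.range g) ≤ Subgroup.closure (Set.range g') := by
  induction h with
  | refl => exact le_rfl
  | tail _ h ih => exact ih.trans h.closure_le

theorem NielsenEq.comp_perm (σ : Equiv.Perm (Fin m)) (g : Fin m → G) : NielsenEq g (g ∘ σ) := by
  induction σ using Equiv.Perm.swap_induction_on' with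
  | one => exact Relation.ReflTransGen.refl
  | mul_swap f x y hxy ih => exact ih.tail (Or.inr (Or.inl ⟨x, y, hxy, rfl⟩))

theorem NielsenEq.of_forall_eq_or_inv {g g' : Fin m → G}
    (h : ∀ i, g' i = g i ∨ g' i = (g i)⁻¹) : NielsenEq g g' := by
  classical
  have key : ∀ s : Finset (Fin m), NielsenEq g (fun i => if i ∈ s then g' i else g i) := by
    intro s
    induction s using Finset.induction_on with
    | empty => simpa using (show NielsenEq g g from Relation.ReflTransGen.refl)
    | insert a s ha ih =>
      rcases h a with h | h
      · convert ih using 2 with i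
        by_cases hi : i = a <;> simp [hi, ha, h]
      · refine ih.tail (Or.inl ⟨a, ?_⟩)
        funext i
        by_cases hi : i = a
        · subst hi; simp [ha, h]
        · simp [hi]
  simpa using key Finset.univ
end

section
variable {n m : ℕ}

theorem nielsenEq_update_signed_mul (g : Fin m → FreeGroup (Fin n)) {x y : Fin m × Bool}
    (hxy : x.1 ≠ y.1) : NielsenEq g (Function.update g x.1 (signed g x * signed g y)) := by
  obtain ⟨i, b⟩ := x
  obtain ⟨j, c⟩ := y
  have h1 : NielsenEq g (Function.update g i (signed g (i, b))) := by
    cases b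
    · exact Relation.ReflTransGen.single (Or.inl ⟨i, rfl⟩)
    · simpa [signed] using (show NielsenEq g g from Relation.ReflTransGen.refl)
  refine h1.tail (Or.inr (Or.inr ⟨i, j, hxy, ?_⟩))
  have hj : Function.update g i (signed g (i, b)) j = g j := Function.update_of_ne hxy.symm _ _
  cases c
  · right
    rw [hj, Function.update_self, Function.update_idem]
    rfl
  · left
    rw [hj, Function.update_self, Function.update_idem]
    rfl

/-! ### Tuples of minimal weight -/

/-- The sum of the weights of the entries of a tuple. -/
def totalWt (g : Fin m → FreeGroup (Fin n)) : ℕ ×ₗ ℕ := ∑ i, wt (g i)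

/-- The tuple `g` has minimal total weight in its Nielsen equivalence class. -/
def IsWtMinimal (g : Fin m → FreeGroup (Fin n)) : Prop :=
  ∀ g', NielsenEq g g' → totalWt g ≤ totalWt g'

theorem exists_isWtMinimal (g : Fin m → FreeGroup (Fin n)) :
    ∃ g', NielsenEq g g' ∧ IsWtMinimal g' := by
  obtain ⟨g', h, hmin⟩ := WellFounded.has_min
    (InvImage.wf (totalWt (n := n) (m := m)) wellFounded_lt) {g' | NielsenEq g g'}
    ⟨g, Relation.ReflTransGen.refl⟩
  exact ⟨g', h, fun g'' h' => not_lt.1 (hmin g'' (Relation.ReflTransGen.trans h h'))⟩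

variable {g : Fin m → FreeGroup (Fin n)}

theorem signed_not (i : Fin m) (b : Bool) : signed g (i, !b) = (signed g (i, b))⁻¹ := by
  cases b <;> simp [signed]

theorem wt_signed (x : Fin m × Bool) : wt (signed g x) = wt (g x.1) := by
  obtain ⟨i, b⟩ := x
  cases b <;> simp [signed, wt_inv]

theorem IsWtMinimal.le_left (hg : IsWtMinimal g) {x y : Fin m × Bool} (hxy : x.1 ≠ y.1) :
    wt (signed g x) ≤ wt (signed g x * signed g y) := by
  by_contra! hlt
  rw [wt_signed] at hlt
  refine (hg _ (nielsenEq_update_signed_mul g hxy)).not_gt ?_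
  refine Finset.sum_lt_sum (fun i _ => ?_) ⟨x.1, Finset.mem_univ _, by simpa using hlt⟩
  by_cases hi : i = x.1
  · subst hi
    simpa using hlt.le
  · simp [hi]

theorem IsWtMinimal.le_right (hg : IsWtMinimal g) {x y : Fin m × Bool} (hxy : x.1 ≠ y.1) :
    wt (signed g y) ≤ wt (signed g x * signed g y) := by
  have := hg.le_left (x := (y.1, !y.2)) (y := (x.1, !x.2)) hxy.symm
  rwa [signed_not, signed_not, ← mul_inv_rev, wt_inv, wt_inv] at this

theorem norm_le_of_wt_le {u v : FreeGroup (Fin n)} (h : wt u ≤ wt v) : u.norm ≤ v.norm := by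
  rcases Prod.Lex.toLex_le_toLex.1 h with h | h
  · exact h.le
  · exact h.1.le

theorem tie_le_of_wt_le {u v : FreeGroup (Fin n)} (h : wt u ≤ wt v) (h' : u.norm = v.norm) :
    tie u ≤ tie v := by
  rcases Prod.Lex.toLex_le_toLex.1 h with h | h
  · exact absurd h' h.ne
  · exact h.2

theorem signed_ne_one {x : Fin m × Bool} (h : g x.1 ≠ 1) : signed g x ≠ 1 := by
  unfold signed
  cases x.2 <;> simpa

theorem IsWtMinimal.two_lcp_le (hg : IsWtMinimal g) {x y : Fin m × Bool} (hx : g x.1 ≠ 1)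
    (hxy : x.1 = y.1 → x.2 = y.2) :
    2 * lcp (signed g x)⁻¹.toWord (signed g y).toWord ≤ (signed g x).norm ∧
    2 * lcp (signed g x)⁻¹.toWord (signed g y).toWord ≤ (signed g y).norm := by
  by_cases h : x.1 = y.1
  · obtain rfl : x = y := Prod.ext h (hxy h)
    have := (two_lcp_inv_self_lt (signed_ne_one hx)).le
    exact ⟨this, this⟩
  · have h1 := norm_le_of_wt_le (hg.le_left h)
    have h2 := norm_le_of_wt_le (hg.le_right h)
    have h3 := norm_inv_mul_add (signed g x)⁻¹ (signed g y)
    rw [inv_inv, norm_inv_eq] at h3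
    constructor <;> omega

/-- If exactly half of `v = p * q⁻¹` is cancelled by a factor on its right, then minimality of the
tie-breaker forces `code q ≤ code p`. -/
theorem IsWtMinimal.code_take_le (hg : IsWtMinimal g) {x y : Fin m × Bool} {k : ℕ}
    (hx : g x.1 ≠ 1) (hxy : x.1 = y.1 → x.2 = y.2) (hk : (signed g x).norm = 2 * k)
    (hl : lcp (signed g x)⁻¹.toWord (signed g y).toWord = k) :
    code ((signed g x)⁻¹.toWord.take k) ≤ code ((signed g x).toWord.take k) := by
  have h2 := (hg.two_lcp_le hx hxy).2
  rw [hl] at h2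
  by_cases h : x.1 = y.1
  · obtain rfl : x = y := Prod.ext h (hxy h)
    have := two_lcp_inv_self_lt (signed_ne_one hx)
    omega
  · refine _root_.code_take_le hk h2 hl (tie_le_of_wt_le (hg.le_right h) ?_)
    have h3 := norm_inv_mul_add (signed g x)⁻¹ (signed g y)
    rw [inv_inv, norm_inv_eq] at h3
    omega

theorem IsWtMinimal.nielsenReduced (hg : IsWtMinimal g) :
    NielsenReduced (fun i : {i // g i ≠ 1} => g i) := by
  have cond : ∀ x y : {i // g i ≠ 1} × Bool, (x.1 = y.1 → x.2 = y.2) →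
      (((x.1 : Fin m), x.2).1 = ((y.1 : Fin m), y.2).1 →
        ((x.1 : Fin m), x.2).2 = ((y.1 : Fin m), y.2).2) := fun x y h h' => h (Subtype.ext h')
  refine ⟨fun i => i.2, fun x y h => (hg.two_lcp_le x.1.2 (cond x y h)).1,
    fun x y h => (hg.two_lcp_le x.1.2 (cond x y h)).2, fun x y z hxy hyz => ?_⟩
  have h1 := (hg.two_lcp_le x.1.2 (cond x y hxy)).2
  have h2 := (hg.two_lcp_le y.1.2 (cond y z hyz)).1
  change lcp (signed g (↑x.1, x.2))⁻¹.toWord (signed g (↑y.1, y.2)).toWord +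
    lcp (signed g (↑y.1, y.2))⁻¹.toWord (signed g (↑z.1, z.2)).toWord <
      (signed g (↑y.1, y.2)).norm
  by_contra! hlt
  have hne : signed g (↑y.1, y.2) ≠ 1 := signed_ne_one y.1.2
  set v := signed g (↑y.1, y.2) with hv
  obtain ⟨k, hk⟩ : ∃ k, k = lcp v⁻¹.toWord (signed g (↑z.1, z.2)).toWord := ⟨_, rfl⟩
  have hn : v.norm = 2 * k := by omega
  have c1 : code (v⁻¹.toWord.take k) ≤ code (v.toWord.take k) :=
    hg.code_take_le y.1.2 (cond y z hyz) hn hk.symm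
  have c2 : code (v⁻¹⁻¹.toWord.take k) ≤ code (v⁻¹.toWord.take k) := by
    have := hg.code_take_le (x := (↑y.1, !y.2)) (y := (↑x.1, !x.2)) (k := k) y.1.2
      (fun h => by simpa using (cond x y hxy h.symm).symm)
      (by rw [signed_not, norm_inv_eq]; exact hn)
      (by rw [signed_not, signed_not, ← hv, inv_inv, lcp_comm]; omega)
    rwa [signed_not, ← hv] at this
  rw [inv_inv] at c2
  have hvl : v.toWord.length = 2 * k := hn
  have heq := eq_of_code_eq (by simp [toWord_inv]) (le_antisymm c1 c2)
  -- The left half of `v` is inverse to the right half, which only happens for `v = 1`.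
  have hlt := two_lcp_inv_self_lt hne
  have := le_lcp_of_take_eq k v⁻¹.toWord v.toWord (by simp [toWord_inv]; omega) (by omega) heq
  omega

theorem IsWtMinimal.exists_eq_of (hg : IsWtMinimal g)
    (hgen : Subgroup.closure (Set.range g) = ⊤) (a : Fin n) :
    ∃ i, g i = of a ∨ g i = (of a)⁻¹ := by
  obtain ⟨i, hi⟩ := hg.nielsenReduced.exists_eq_of (a := a) (by
    rw [eq_top_iff, ← hgen, Subgroup.closure_le]
    rintro _ ⟨i, rfl⟩
    by_cases h : g i = 1
    · rw [h]; exact one_mem _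
    · exact Subgroup.subset_closure ⟨⟨i, h⟩, rfl⟩)
  exact ⟨i, hi⟩

/-- Once the entries `f a` exhaust the basis up to inversion, a nontrivial entry elsewhere could be
shortened by cancelling its first letter. -/
theorem IsWtMinimal.eq_one (hg : IsWtMinimal g) {f : Fin n → Fin m}
    (hf : ∀ a, g (f a) = of a ∨ g (f a) = (of a)⁻¹) {j : Fin m} (hj : ∀ a, f a ≠ j) :
    g j = 1 := by
  by_contra h
  cases hw : (g j).toWord with
  | nil => exact h (toWord_eq_nil_iff.1 hw)
  | cons x l =>
    obtain ⟨c, hc⟩ : ∃ c, signed g (f x.1, c) = mk [(x.1, !x.2)] := by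
      obtain ⟨a, b⟩ := x
      rcases hf a with hf | hf <;> cases b
      · exact ⟨true, hf⟩
      · exact ⟨false, by simp [signed, hf]; rfl⟩
      · exact ⟨false, by simp [signed, hf]; rfl⟩
      · exact ⟨true, hf⟩
    have h1 := norm_le_of_wt_le (hg.le_right (x := (f x.1, c)) (y := (j, true)) (hj _))
    have h2 : signed g (f x.1, c) * signed g (j, true) = mk l := by
      rw [hc]
      change mk _ * g j = _
      rw [← mk_toWord (x := g j), hw, show x :: l = [x] ++ l from rfl, ← mul_mk, ← mul_assoc]
      have : mk [(x.1, !x.2)] = (mk [x])⁻¹ := rfl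
      rw [this, inv_mul_cancel, one_mul]
    rw [h2] at h1
    have h3 : (mk l).norm ≤ l.length := norm_mk_le
    have h4 : (signed g (j, true)).norm = l.length + 1 := by
      change (g j).toWord.length = _
      rw [hw, List.length_cons]
    omega
end

end

/-- Nielsen's theorem on generating tuples of free groups. If
`y_1,…,y_m` generate `F_n`, then `m ≥ n` and `(y_1,…,y_m)` is Nielsen
equivalent to `(x_1,…,x_n,1,…,1)`. -/
theorem nielsen_generating_tuples_free (n m : ℕ)
    (y : Fin m → FreeGroup (Fin n))
    (hgen : Subgroup.closure (Set.range y) = ⊤) :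
    n ≤ m ∧
      NielsenEq y (fun i : Fin m =>
        if h : (i : ℕ) < n then FreeGroup.of (⟨(i : ℕ), h⟩ : Fin n) else 1) := by
  obtain ⟨g, hyg, hg⟩ := exists_isWtMinimal y
  have hgen' : Subgroup.closure (Set.range g) = ⊤ := top_le_iff.1 (hgen ▸ hyg.closure_le)
  choose f hf using hg.exists_eq_of hgen'
  have hinj : Function.Injective f := by
    intro a b hab
    have ha := hf a
    rw [hab] at ha
    -- A generator is not the inverse of a generator, since their signs as words differ.
    have key : ∀ a b : Fin n, FreeGroup.of a ≠ (FreeGroup.of b)⁻¹ := fun a b h => by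
      have := congrArg FreeGroup.toWord h
      simp [FreeGroup.toWord_inv, FreeGroup.invRev] at this
    rcases ha with ha | ha <;> rcases hf b with hb | hb <;> rw [hb] at ha
    · exact (FreeGroup.of_injective ha).symm
    · exact absurd ha.symm (key _ _)
    · exact absurd ha (key _ _)
    · exact (FreeGroup.of_injective (inv_injective ha)).symm
  have hnm : n ≤ m := by simpa using Fintype.card_le_of_injective f hinj
  refine ⟨hnm, ?_⟩
  obtain ⟨σ, hσ⟩ : ∃ σ : Equiv.Perm (Fin m), ∀ a, σ (Fin.castLE hnm a) = f a := by
    let e : Set.range (Fin.castLE hnm) ≃ Set.range f :=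
      (Equiv.ofInjective _ (Fin.castLE_injective hnm)).symm.trans (Equiv.ofInjective f hinj)
    classical
    refine ⟨Equiv.extendSubtype (p := (· ∈ Set.range (Fin.castLE hnm)))
      (q := (· ∈ Set.range f)) e, fun a => ?_⟩
    rw [Equiv.extendSubtype_apply_of_mem _ _ ⟨a, rfl⟩]
    have : (⟨Fin.castLE hnm a, ⟨a, rfl⟩⟩ : Set.range (Fin.castLE hnm)) =
      Equiv.ofInjective _ (Fin.castLE_injective hnm) a := rfl
    simp only [e, Equiv.trans_apply]
    erw [this, Equiv.symm_apply_apply]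
    rfl
  refine Relation.ReflTransGen.trans hyg (Relation.ReflTransGen.trans (NielsenEq.comp_perm σ g)
    (NielsenEq.of_forall_eq_or_inv fun i => ?_))
  by_cases hi : (i : ℕ) < n
  · have : g (σ i) = g (f ⟨i, hi⟩) := by rw [← hσ]; rfl
    simp only [hi, dif_pos, Function.comp_apply, this]
    rcases hf ⟨i, hi⟩ with h | h <;> simp [h]
  · left
    simp only [hi, dif_neg, not_false_eq_true, Function.comp_apply]
    refine (hg.eq_one hf fun a ha => hi ?_).symm
    rw [← hσ, σ.injective.eq_iff] at ha
    rw [← ha]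
    exact a.2
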